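/- For every integer r ≥ 1 and every integer n ≥ 1, the number of Motzkin paths of length n with no plateaus of length r satisfies c_r(n,0) = c_r(n-1,0) + Σ_{k=0}^{n-2} c_r(k,0)·c_r(n-k-2,0) - c_r(n-r-2,0), where c_r(m,0) = 0 for m < 0. -/

import Mathlib

/-- Steps of a Motzkin path: up, horizontal, down. -/
inductive Step : Type
  | U | H | D
  deriving DecidableEq

/-- A list of steps is a Motzkin path if every prefix has at least as many
up steps as down steps, and the total numbers of up and down steps agree. -/
def IsMotzkin (l : List Step) : Prop :=
  (∀ k : ℕ, (l.take k).count Step.D ≤ (l.take k).count Step.U) ∧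
    l.count Step.U = l.count Step.D

/-- The number of plateaus of length `r` (occurrences of a U step, then `r`
consecutive H steps, then a D step) in a path. -/
def plateauCountR (r : ℕ) (l : List Step) : ℕ :=
  ((Finset.range l.length).filter
    (fun i => (l.drop i).take (r + 2)
      = Step.U :: (List.replicate r Step.H ++ [Step.D]))).card

/-- `cR r n p` is the number of Motzkin paths of length `n` with exactly `p`
plateaus of length `r`; it is `0` when `n < 0` or `p < 0`. -/
noncomputable def cR (r : ℕ) (n p : ℤ) : ℕ :=
  if 0 ≤ n ∧ 0 ≤ p then
    Nat.card {l : List Step // l.length = n.toNat ∧ IsMotzkin l ∧ plateauCountR r l = p.toNat}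
  else 0

instance : Fintype Step := ⟨{Step.U, Step.H, Step.D}, by rintro (_ | _ | _) <;> simp⟩

/-- The word `U Hʳ D` of a plateau of length `r`. -/
def plateauWord (r : ℕ) : List Step :=
  Step.U :: (List.replicate r Step.H ++ [Step.D])

theorem plateauCountR_eq_zero_iff (r : ℕ) (l : List Step) :
    plateauCountR r l = 0 ↔ ¬ plateauWord r <:+: l := by
  have hlen : (plateauWord r).length = r + 2 := by simp [plateauWord]
  rw [plateauCountR, Finset.card_eq_zero, Finset.filter_eq_empty_iff]
  constructor
  · rintro h ⟨s, t, rfl⟩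
    refine h (x := s.length) (by simp [hlen]) ?_
    rw [List.append_assoc, List.drop_left, ← hlen, List.take_left]
    rfl
  · intro h i _ hi
    refine h ?_
    rw [plateauWord, ← hi]
    exact (List.take_prefix _ _).isInfix.trans (List.drop_suffix _ _).isInfix

theorem isMotzkin_iff_prefix (l : List Step) :
    IsMotzkin l ↔ (∀ p, p <+: l → p.count Step.D ≤ p.count Step.U) ∧
      l.count Step.U = l.count Step.D := by
  refine and_congr_left fun _ => ⟨fun h p hp => ?_, fun h k => h _ (List.take_prefix _ _)⟩
  rw [List.prefix_iff_eq_take.mp hp]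
  exact h _

theorem isMotzkin_nil : IsMotzkin [] := by simp [IsMotzkin]

theorem isMotzkin_cons_H (l : List Step) : IsMotzkin (Step.H :: l) ↔ IsMotzkin l := by
  simp only [isMotzkin_iff_prefix, List.prefix_cons_iff]
  constructor
  · rintro ⟨h, hc⟩
    exact ⟨fun p hp => by simpa using h (Step.H :: p) (.inr ⟨p, rfl, hp⟩), by simpa using hc⟩
  · rintro ⟨h, hc⟩
    refine ⟨?_, by simpa using hc⟩
    rintro _ (rfl | ⟨p, rfl, hp⟩)
    · simp
    · simpa using h p hp

theorem isMotzkin_replicate_H (r : ℕ) : IsMotzkin (List.replicate r Step.H) := by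
  induction r with
  | zero => exact isMotzkin_nil
  | succ r ih => rwa [List.replicate_succ, isMotzkin_cons_H]

theorem not_isMotzkin_cons_D (l : List Step) : ¬ IsMotzkin (Step.D :: l) := by
  intro h
  simpa using h.1 1

theorem IsMotzkin.arch {a b : List Step} (ha : IsMotzkin a) (hb : IsMotzkin b) :
    IsMotzkin (Step.U :: (a ++ Step.D :: b)) := by
  rw [isMotzkin_iff_prefix] at *
  refine ⟨fun p hp => ?_, ?_⟩
  · rcases List.prefix_cons_iff.mp hp with rfl | ⟨q, rfl, hq⟩
    · simp
    rcases List.prefix_or_prefix_of_prefix hq (List.prefix_append a _) with hq' | ⟨q, rfl⟩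
    · have := ha.1 _ hq'
      simp
      omega
    · rw [List.prefix_append_right_inj] at hq
      rcases List.prefix_cons_iff.mp hq with rfl | ⟨q, rfl, hqb⟩
      · simp [ha.2]
      · have := hb.1 _ hqb
        simp [ha.2]
        omega
  · simp [ha.2, hb.2]
    omega

theorem exists_first_descent (t : List Step) (h : ℕ) (ht : h + t.count Step.U < t.count Step.D) :
    ∃ a b, t = a ++ Step.D :: b ∧ (∀ p, p <+: a → p.count Step.D ≤ h + p.count Step.U) ∧
      a.count Step.D = h + a.count Step.U := by
  induction t generalizing h with
  | nil => simp at ht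
  | cons x t ih =>
    have extend : ∀ h', h' + t.count Step.U < t.count Step.D →
        h' + [x].count Step.D = h + [x].count Step.U →
        ∃ a b, x :: t = a ++ Step.D :: b ∧
          (∀ p, p <+: a → p.count Step.D ≤ h + p.count Step.U) ∧
          a.count Step.D = h + a.count Step.U := by
      intro h' ht' hx
      obtain ⟨a, b, rfl, hp, hc⟩ := ih h' ht'
      refine ⟨x :: a, b, rfl, fun p hpa => ?_, ?_⟩
      · rcases List.prefix_cons_iff.mp hpa with rfl | ⟨q, rfl, hq⟩
        · simp
        · have := hp q hq
          rw [← List.singleton_append, List.count_append, List.count_append]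
          omega
      · rw [← List.singleton_append, List.count_append, List.count_append]
        omega
    cases x with
    | U => exact extend (h + 1) (by simp at ht; omega) (by simp)
    | H => exact extend h (by simpa using ht) (by simp)
    | D =>
      cases h with
      | zero => exact ⟨[], t, rfl, by simp, by simp⟩
      | succ h => exact extend h (by simp at ht; omega) (by simp)

theorem IsMotzkin.exists_arch {t : List Step} (h : IsMotzkin (Step.U :: t)) :
    ∃ a b, t = a ++ Step.D :: b ∧ IsMotzkin a ∧ IsMotzkin b := by
  rw [isMotzkin_iff_prefix] at h
  obtain ⟨hp, hc⟩ := h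
  obtain ⟨a, b, rfl, ha, hac⟩ := exists_first_descent t 0 (by simp at hc; omega)
  simp only [zero_add] at ha hac
  refine ⟨a, b, rfl, (isMotzkin_iff_prefix a).2 ⟨ha, hac.symm⟩,
    (isMotzkin_iff_prefix b).2 ⟨fun p hpb => ?_, ?_⟩⟩
  · have := hp (Step.U :: (a ++ Step.D :: p)) (by simpa using hpb)
    simp at this
    omega
  · simp at hc
    omega

theorem IsMotzkin.not_append_D_prefix {a a' : List Step} (ha : IsMotzkin a)
    (ha' : IsMotzkin a') : ¬ a ++ [Step.D] <+: a' := by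
  intro h
  have := ((isMotzkin_iff_prefix a').1 ha').1 _ h
  simp [ha.2] at this

theorem IsMotzkin.append_D_inj {a a' b b' : List Step} (ha : IsMotzkin a) (ha' : IsMotzkin a')
    (h : a ++ Step.D :: b = a' ++ Step.D :: b') : a = a' ∧ b = b' := by
  rcases List.append_eq_append_iff.mp h with ⟨c, rfl, hc⟩ | ⟨c, rfl, hc⟩
  · cases c with
    | nil => simpa using hc
    | cons x c =>
      obtain ⟨rfl, -⟩ : Step.D = x ∧ _ := by simpa using hc
      exact (ha.not_append_D_prefix ha' ⟨c, by simp⟩).elim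
  · cases c with
    | nil => simpa [eq_comm] using hc
    | cons x c =>
      obtain ⟨rfl, -⟩ : Step.D = x ∧ _ := by simpa using hc
      exact (ha'.not_append_D_prefix ha ⟨c, by simp⟩).elim

theorem plateauWord_infix_cons_iff {r : ℕ} {x : Step} (hx : x ≠ Step.U) (l : List Step) :
    plateauWord r <:+: x :: l ↔ plateauWord r <:+: l := by
  rw [List.infix_cons_iff, or_iff_right]
  rintro ⟨t, ht⟩
  simp [plateauWord] at ht
  exact hx ht.1.symm

theorem IsMotzkin.not_suffix_U_replicate_H {a : List Step} (ha : IsMotzkin a) (r : ℕ) :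
    ¬ Step.U :: List.replicate r Step.H <:+ a := by
  rintro ⟨s, rfl⟩
  have h₁ := ((isMotzkin_iff_prefix _).1 ha).1 s (List.prefix_append _ _)
  have h₂ := ha.2
  simp [List.count_replicate] at h₂
  omega

theorem IsMotzkin.plateauWord_infix_append_D_iff {a : List Step} (ha : IsMotzkin a) (r : ℕ)
    (b : List Step) :
    plateauWord r <:+: a ++ Step.D :: b ↔ plateauWord r <:+: a ∨ plateauWord r <:+: b := by
  constructor
  · rintro ⟨s, t, h⟩
    rw [List.append_assoc] at h
    rcases List.append_eq_append_iff.mp h with ⟨c, rfl, hc⟩ | ⟨c, rfl, hc⟩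
    · rcases List.append_eq_append_iff.mp hc with ⟨d, rfl, hd⟩ | ⟨d, hd, hd'⟩
      · exact .inl ⟨s, d, by simp⟩
      · rcases d.eq_nil_or_concat with rfl | ⟨d, y, rfl⟩
        · exact .inl ⟨s, [], by simp [hd]⟩
        have hd₂ : Step.U :: List.replicate r Step.H = c ++ d := by
          have := congrArg List.dropLast hd
          rwa [plateauWord, ← List.cons_append, List.dropLast_concat, List.concat_eq_append,
            ← List.append_assoc, List.dropLast_concat] at this
        cases d with
        | nil =>
          refine (ha.not_suffix_U_replicate_H r ⟨s, ?_⟩).elim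
          rw [hd₂, List.append_nil]
        | cons z d =>
          obtain ⟨rfl, -⟩ : Step.D = z ∧ _ := by simpa using hd'
          have : Step.D ∈ Step.U :: List.replicate r Step.H := by simp [hd₂]
          simp [List.mem_replicate] at this
    · refine .inr ((plateauWord_infix_cons_iff (x := Step.D) (by simp) b).1 ⟨c, t, ?_⟩)
      rw [hc, List.append_assoc]
  · rintro (h | h)
    · exact h.trans (List.prefix_append _ _).isInfix
    · exact h.trans ⟨a ++ [Step.D], [], by simp⟩

theorem IsMotzkin.plateauWord_infix_arch_iff {a : List Step} (ha : IsMotzkin a) (r : ℕ)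
    (b : List Step) :
    plateauWord r <:+: Step.U :: (a ++ Step.D :: b) ↔
      a = List.replicate r Step.H ∨ plateauWord r <:+: a ∨ plateauWord r <:+: b := by
  rw [List.infix_cons_iff, ha.plateauWord_infix_append_D_iff]
  refine or_congr_left ⟨?_, ?_⟩
  · rintro ⟨t, ht⟩
    refine (ha.append_D_inj (isMotzkin_replicate_H r) (b := b) (b' := t) ?_).1
    simpa [plateauWord] using ht.symm
  · rintro rfl
    exact ⟨b, by simp [plateauWord]⟩

/-- The Motzkin paths of length `n` without plateaus of length `r`. -/
noncomputable def plateauFree (r n : ℕ) : Finset (List Step) :=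
  ((List.finite_length_eq Step n).subset
    (t := {l | l.length = n ∧ IsMotzkin l ∧ ¬ plateauWord r <:+: l}) fun _ h => h.1).toFinset

theorem mem_plateauFree {r n : ℕ} {l : List Step} :
    l ∈ plateauFree r n ↔ l.length = n ∧ IsMotzkin l ∧ ¬ plateauWord r <:+: l := by
  simp [plateauFree]

theorem cR_natCast_zero (r n : ℕ) : cR r n 0 = (plateauFree r n).card := by
  rw [cR, if_pos (by simp)]
  refine Nat.subtype_card _ fun l => ?_
  rw [mem_plateauFree, Int.toNat_natCast, Int.toNat_zero, plateauCountR_eq_zero_iff]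

theorem cR_of_neg (r : ℕ) {n : ℤ} (hn : n < 0) (p : ℤ) : cR r n p = 0 :=
  if_neg fun h => hn.not_ge h.1

theorem replicate_H_mem_plateauFree (r : ℕ) : List.replicate r Step.H ∈ plateauFree r r := by
  refine mem_plateauFree.2 ⟨by simp, isMotzkin_replicate_H r, fun h => ?_⟩
  have := h.length_le
  simp [plateauWord] at this

/-- The pairs of plateau-free Motzkin paths of total length `n`. -/
noncomputable def plateauFreePairs (r n : ℕ) : Finset (List Step × List Step) :=
  (Finset.HasAntidiagonal.antidiagonal n).biUnion fun p => plateauFree r p.1 ×ˢ plateauFree r p.2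

theorem mem_plateauFreePairs {r n : ℕ} {x : List Step × List Step} :
    x ∈ plateauFreePairs r n ↔ x.1.length + x.2.length = n ∧
      (IsMotzkin x.1 ∧ ¬ plateauWord r <:+: x.1) ∧ IsMotzkin x.2 ∧ ¬ plateauWord r <:+: x.2 := by
  simp only [plateauFreePairs, Finset.mem_biUnion, Finset.HasAntidiagonal.mem_antidiagonal,
    Finset.mem_product, mem_plateauFree, Prod.exists]
  constructor
  · rintro ⟨_, _, h, ⟨rfl, h₁⟩, rfl, h₂⟩
    exact ⟨h, h₁, h₂⟩
  · rintro ⟨h, h₁, h₂⟩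
    exact ⟨_, _, h, ⟨rfl, h₁⟩, rfl, h₂⟩

theorem card_plateauFreePairs (r n : ℕ) :
    (plateauFreePairs r n).card =
      ∑ p ∈ Finset.HasAntidiagonal.antidiagonal n,
        (plateauFree r p.1).card * (plateauFree r p.2).card := by
  rw [plateauFreePairs, Finset.card_biUnion]
  · simp only [Finset.card_product]
  · intro p _ q _ hpq
    refine Finset.disjoint_left.2 fun x hx hx' => hpq ?_
    simp only [Finset.mem_product, mem_plateauFree] at hx hx'
    exact Prod.ext (hx.1.1.symm.trans hx'.1.1) (hx.2.1.symm.trans hx'.2.1)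

theorem card_filter_fst_eq_replicate_H (r n : ℕ) :
    (((plateauFreePairs r n).filter fun x => x.1 = List.replicate r Step.H).card : ℤ) =
      cR r ((n : ℤ) - r) 0 := by
  by_cases h : r ≤ n
  · rw [← Nat.cast_sub h, cR_natCast_zero, Nat.cast_inj]
    symm
    refine Finset.card_bij (fun b _ => (List.replicate r Step.H, b)) ?_ ?_ ?_
    · intro b hb
      have hr := mem_plateauFree.1 (replicate_H_mem_plateauFree r)
      have hb := mem_plateauFree.1 hb
      refine Finset.mem_filter.2 ⟨mem_plateauFreePairs.2 ⟨?_, hr.2, hb.2⟩, rfl⟩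
      simp [hb.1, h]
    · intro b _ b' _ hb
      exact congrArg Prod.snd hb
    · rintro ⟨a, b⟩ hx
      obtain ⟨hx, rfl⟩ := Finset.mem_filter.1 hx
      have hx := mem_plateauFreePairs.1 hx
      refine ⟨b, mem_plateauFree.2 ⟨?_, hx.2.2⟩, rfl⟩
      have := hx.1
      simp at this
      omega
  · rw [cR_of_neg r (by omega), Nat.cast_inj, Finset.card_eq_zero, Finset.filter_eq_empty_iff]
    intro x hx hxr
    have := (mem_plateauFreePairs.1 hx).1
    simp [hxr] at this
    omega

theorem plateauFree_one (r : ℕ) : plateauFree r 1 = (plateauFree r 0).image (Step.H :: ·) := by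
  ext l
  simp only [Finset.mem_image, mem_plateauFree]
  constructor
  · rintro ⟨hl, hm, hp⟩
    obtain ⟨x, rfl⟩ := List.length_eq_one_iff.1 hl
    cases x with
    | D => exact (not_isMotzkin_cons_D _ hm).elim
    | U => simp [IsMotzkin] at hm
    | H =>
      rw [plateauWord_infix_cons_iff (by simp)] at hp
      exact ⟨[], ⟨rfl, isMotzkin_nil, hp⟩, rfl⟩
  · rintro ⟨l, ⟨hl, hm, hp⟩, rfl⟩
    exact ⟨by simp [hl], (isMotzkin_cons_H l).2 hm,
      (plateauWord_infix_cons_iff (by simp) l).not.2 hp⟩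

theorem plateauFree_add_two (r n : ℕ) :
    plateauFree r (n + 2) = (plateauFree r (n + 1)).image (Step.H :: ·) ∪
      ((plateauFreePairs r n).filter fun x => ¬ x.1 = List.replicate r Step.H).image
        fun x => Step.U :: (x.1 ++ Step.D :: x.2) := by
  ext l
  simp only [Finset.mem_union, Finset.mem_image, Finset.mem_filter, mem_plateauFree,
    mem_plateauFreePairs, Prod.exists]
  constructor
  · rintro ⟨hl, hm, hp⟩
    cases l with
    | nil => simp at hl
    | cons x l =>
      cases x with
      | D => exact (not_isMotzkin_cons_D l hm).elim
      | H =>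
        rw [plateauWord_infix_cons_iff (by simp)] at hp
        exact .inl ⟨l, ⟨by simpa using hl, (isMotzkin_cons_H l).1 hm, hp⟩, rfl⟩
      | U =>
        obtain ⟨a, b, rfl, ha, hb⟩ := hm.exists_arch
        rw [ha.plateauWord_infix_arch_iff, not_or, not_or] at hp
        refine .inr ⟨a, b, ⟨⟨?_, ⟨ha, hp.2.1⟩, hb, hp.2.2⟩, hp.1⟩, rfl⟩
        simp at hl
        omega
  · rintro (⟨l, ⟨hl, hm, hp⟩, rfl⟩ | ⟨a, b, ⟨⟨hl, ⟨ha, hpa⟩, hb, hpb⟩, hr⟩, rfl⟩)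
    · exact ⟨by simp [hl], (isMotzkin_cons_H l).2 hm,
        (plateauWord_infix_cons_iff (by simp) l).not.2 hp⟩
    · refine ⟨by simp; omega, ha.arch hb, ?_⟩
      rw [ha.plateauWord_infix_arch_iff]
      tauto

theorem card_plateauFree_one (r : ℕ) : (plateauFree r 1).card = (plateauFree r 0).card := by
  rw [plateauFree_one, Finset.card_image_of_injective _ List.cons_injective]

theorem card_plateauFree_add_two (r n : ℕ) :
    (plateauFree r (n + 2)).card = (plateauFree r (n + 1)).card +
      ((plateauFreePairs r n).filter fun x => ¬ x.1 = List.replicate r Step.H).card := by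
  rw [plateauFree_add_two, Finset.card_union_of_disjoint,
    Finset.card_image_of_injective _ List.cons_injective, Finset.card_image_of_injOn]
  · rintro ⟨a, b⟩ hx ⟨a', b'⟩ hy h
    have hx := mem_plateauFreePairs.1 (Finset.mem_filter.1 hx).1
    have hy := mem_plateauFreePairs.1 (Finset.mem_filter.1 hy).1
    obtain ⟨rfl, rfl⟩ := hx.2.1.1.append_D_inj hy.2.1.1 (List.cons_injective h)
    rfl
  · simp [Finset.disjoint_left]

theorem sum_Icc_cR_mul_cR (r n : ℕ) :
    ∑ k ∈ Finset.Icc (0 : ℤ) n, (cR r k 0 : ℤ) * (cR r (n - k) 0 : ℤ) =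
      (plateauFreePairs r n).card := by
  rw [card_plateauFreePairs, Nat.cast_sum]
  symm
  refine Finset.sum_bij (fun p _ => (p.1 : ℤ)) ?_ ?_ ?_ ?_
  · intro p hp
    have := Finset.HasAntidiagonal.mem_antidiagonal.1 hp
    simp only [Finset.mem_Icc]
    omega
  · intro p hp q hq h
    exact (Finset.HasAntidiagonal.antidiagonal_congr hp hq).2 (by exact_mod_cast h)
  · intro k hk
    have hk := Finset.mem_Icc.1 hk
    exact ⟨(k.toNat, n - k.toNat), Finset.HasAntidiagonal.mem_antidiagonal.2 (by dsimp; omega),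
      by simp [hk.1]⟩
  · intro p hp
    have hp := Finset.HasAntidiagonal.mem_antidiagonal.1 hp
    have : (n : ℤ) - p.1 = (p.2 : ℕ) := by omega
    rw [this, cR_natCast_zero, cR_natCast_zero, Nat.cast_mul]

theorem plateauR_free_recursion (r : ℕ) (hr : 1 ≤ r) (n : ℤ) (hn : 1 ≤ n) :
    (cR r n 0 : ℤ)
      = (cR r (n - 1) 0 : ℤ)
        + ∑ k ∈ Finset.Icc (0 : ℤ) (n - 2), (cR r k 0 : ℤ) * (cR r (n - k - 2) 0 : ℤ)
        - (cR r (n - r - 2) 0 : ℤ) := by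
  obtain rfl | hn : n = 1 ∨ 2 ≤ n := by omega
  · have h₀ := cR_natCast_zero r 0
    have h₁ := cR_natCast_zero r 1
    rw [card_plateauFree_one] at h₁
    rw [cR_of_neg r (n := 1 - r - 2) (by omega)]
    push_cast at h₀ h₁
    simp [h₀, h₁]
  · obtain ⟨m, rfl⟩ : ∃ m : ℕ, n = ((m + 2 : ℕ) : ℤ) := ⟨(n - 2).toNat, by omega⟩
    have hsplit := Finset.card_filter_add_card_filter_not (s := plateauFreePairs r m)
      (fun x => x.1 = List.replicate r Step.H)
    have e₁ : ((m + 2 : ℕ) : ℤ) - 1 = ((m + 1 : ℕ) : ℤ) := by push_cast; ring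
    have e₂ : ((m + 2 : ℕ) : ℤ) - 2 = m := by push_cast; ring
    have e₃ : ((m + 2 : ℕ) : ℤ) - r - 2 = m - r := by push_cast; ring
    have e₄ : ∀ k : ℤ, ((m + 2 : ℕ) : ℤ) - k - 2 = m - k := fun k => by push_cast; ring
    simp only [e₁, e₂, e₃, e₄]
    rw [sum_Icc_cR_mul_cR, ← card_filter_fst_eq_replicate_H, cR_natCast_zero, cR_natCast_zero,
      card_plateauFree_add_two]
    omega
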